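/- For c > 0 and real l ≠ 0, the contour integral (1/2πi) ∫_{c-i∞}^{c+i∞} e^{ls}/s ds equals 1 if l > 0 and 0 if l < 0 (the integral understood as a principal value / improper Riemann integral). -/

import Mathlib

open Filter Complex

/-!
Write `V l c T` for the integral of `exp (l * s) / s` along the segment from `c - iT` to `c + iT`,
parametrized by `s = c + it` with measure `dt`; the quantity in question is `V l c T / (2π)`.

* If `l < 0`, Cauchy's theorem on the rectangle `[c, c + T] × [-T, T]` writes `V l c T` through the
  three other sides. There `|exp (l * s)| = exp (l * Re s)` decays, the horizontal sides contribute
  `O(1 / T)` and the far vertical side `O(exp (l * T))`, so `V l c T → 0`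
  (`tendsto_verticalIntegral_of_neg`).
* If `l > 0`, the substitution `s ↦ -s` gives `V l (-c) T = -V (-l) c T → 0`, so only the difference
  `V l c T - V l (-c) T` matters. The function `(exp (l * s) - 1) / s` extends to an entire
  function, so Cauchy's theorem on `[-c, c] × [-T, T]`, whose horizontal sides contribute
  `O(1 / T)`, shows that this difference has the same limit as the one with `1 / s` in place of
  `exp (l * s) / s`. The latter is `4 * arctan (T / c) → 2π`, because the even part in `t` of
  `1 / (c + it)` is `c / (c² + t²)`. This takes the place of the residue theorem.
-/

/-- The integral of `exp (l * s) / s` over `s = c + it`, `-T ≤ t ≤ T`, with respect to `dt`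
(so without the factor `i` of `ds = i dt`). -/
noncomputable def verticalIntegral (l c T : ℝ) : ℂ :=
  ∫ t in (-T)..T, Complex.exp ((l : ℂ) * (c + t * Complex.I)) / (c + t * Complex.I)

lemma norm_exp_mul_vertical (l x y : ℝ) :
    ‖Complex.exp ((l : ℂ) * (x + y * Complex.I))‖ = Real.exp (l * x) := by
  simp [Complex.norm_exp]

lemma abs_le_norm_add_mul_I (x y : ℝ) : |y| ≤ ‖(x : ℂ) + y * Complex.I‖ := by
  simpa using Complex.abs_im_le_norm ((x : ℂ) + y * Complex.I)

lemma abs_le_norm_add_mul_I' (x y : ℝ) : |x| ≤ ‖(x : ℂ) + y * Complex.I‖ := by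
  simpa using Complex.abs_re_le_norm ((x : ℂ) + y * Complex.I)

lemma add_mul_I_ne_zero {c : ℝ} (hc : c ≠ 0) (t : ℝ) : (c : ℂ) + t * Complex.I ≠ 0 := by
  intro h
  simpa [hc] using congrArg Complex.re h

/-- Estimate for the horizontal sides of the rectangle when `l < 0`. -/
lemma norm_horizontal_le {l c T y : ℝ} (hl : l < 0) (hc : 0 < c) (hT : 0 < T) (hy : |y| = T) :
    ‖∫ x in c..(c + T), Complex.exp ((l : ℂ) * (x + y * Complex.I)) / (x + y * Complex.I)‖
      ≤ 1 / (-l) / T := by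
  have hint : ∫ x in c..(c + T), Real.exp (l * x) / T
      = Real.exp (l * (c + T)) / l / T - Real.exp (l * c) / l / T := by
    apply intervalIntegral.integral_eq_sub_of_hasDerivAt (f := fun x => Real.exp (l * x) / l / T)
    · intro x _
      refine (((((hasDerivAt_id' x).const_mul l).exp).div_const l).div_const T).congr_deriv ?_
      rw [mul_one, mul_div_cancel_right₀ _ hl.ne]
    · exact Continuous.intervalIntegrable (by fun_prop) _ _
  have h1 : ‖∫ x in c..(c + T),
      Complex.exp ((l : ℂ) * (x + y * Complex.I)) / (x + y * Complex.I)‖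
      ≤ ∫ x in c..(c + T), Real.exp (l * x) / T := by
    apply intervalIntegral.norm_integral_le_of_norm_le (by linarith)
    · refine Filter.Eventually.of_forall fun x _ => ?_
      rw [norm_div, norm_exp_mul_vertical]
      gcongr
      exact hy ▸ abs_le_norm_add_mul_I x y
    · exact Continuous.intervalIntegrable (by fun_prop) _ _
  refine h1.trans ?_
  rw [hint, ← sub_div]
  gcongr
  have h2 : Real.exp (l * c) ≤ 1 := Real.exp_le_one_iff.2 (by nlinarith)
  have h3 := Real.exp_pos (l * (c + T))
  rw [← sub_div, ← neg_div_neg_eq]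
  gcongr
  · linarith
  · linarith

/-- Estimate for the far vertical side of the rectangle. -/
lemma norm_verticalIntegral_far_le {l c T : ℝ} (hl : l < 0) (hc : 0 < c) (hT : 0 < T) :
    ‖verticalIntegral l (c + T) T‖ ≤ 2 * Real.exp (l * T) := by
  have h : ‖verticalIntegral l (c + T) T‖ ≤ Real.exp (l * T) / T * |T - (-T)| := by
    apply intervalIntegral.norm_integral_le_of_norm_le_const
    intro t _
    rw [norm_div, norm_exp_mul_vertical]
    have h1 : T ≤ ‖((c + T : ℝ) : ℂ) + t * Complex.I‖ :=
      le_trans (by rw [abs_of_pos] <;> linarith) (abs_le_norm_add_mul_I' (c + T) t)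
    gcongr ?_ / ?_
    exact Real.exp_le_exp.2 (by nlinarith)
  refine h.trans (le_of_eq ?_)
  rw [abs_of_pos (by linarith)]
  field_simp
  ring

lemma norm_verticalIntegral_le {l c T : ℝ} (hl : l < 0) (hc : 0 < c) (hT : 0 < T) :
    ‖verticalIntegral l c T‖ ≤ 2 * (1 / (-l) / T) + 2 * Real.exp (l * T) := by
  have hrect := Complex.integral_boundary_rect_eq_zero_of_differentiableOn
    (fun s : ℂ => Complex.exp ((l : ℂ) * s) / s) ⟨c, -T⟩ ⟨c + T, T⟩ (by
      intro s hs
      have hre : c ≤ s.re := by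
        have := hs.1
        simp only [Set.mem_preimage] at this
        rw [Set.uIcc_of_le (by linarith)] at this
        exact this.1
      have hs0 : s ≠ 0 := by
        rintro rfl
        simp at hre
        linarith
      exact DifferentiableAt.differentiableWithinAt (by fun_prop (disch := exact hs0)))
  simp only [smul_eq_mul] at hrect
  have hb := norm_horizontal_le (y := -T) hl hc hT (by rw [abs_neg, abs_of_pos hT])
  have ht := norm_horizontal_le (y := T) hl hc hT (abs_of_pos hT)
  have hf := norm_verticalIntegral_far_le hl hc hT
  set B := ∫ x in c..(c + T),
    Complex.exp ((l : ℂ) * (x + (-T : ℝ) * Complex.I)) / (x + (-T : ℝ) * Complex.I)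
  set U := ∫ x in c..(c + T), Complex.exp ((l : ℂ) * (x + T * Complex.I)) / (x + T * Complex.I)
  change B - U + Complex.I * verticalIntegral l (c + T) T - Complex.I * verticalIntegral l c T = 0
    at hrect
  have hV : Complex.I * verticalIntegral l c T
      = B - U + Complex.I * verticalIntegral l (c + T) T := by
    linear_combination -hrect
  have hn : ‖verticalIntegral l c T‖ = ‖Complex.I * verticalIntegral l c T‖ := by simp
  rw [hn, hV]
  have h1 := norm_add_le (B - U) (Complex.I * verticalIntegral l (c + T) T)
  have h2 := norm_sub_le B U
  simp only [norm_mul, Complex.norm_I, one_mul] at h1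
  linarith

lemma tendsto_verticalIntegral_of_neg {l c : ℝ} (hl : l < 0) (hc : 0 < c) :
    Tendsto (verticalIntegral l c) atTop (nhds 0) := by
  have h1 : Tendsto (fun T : ℝ => 1 / (-l) / T) atTop (nhds 0) :=
    tendsto_const_nhds.div_atTop tendsto_id
  have h2 : Tendsto (fun T : ℝ => Real.exp (l * T)) atTop (nhds 0) :=
    Real.tendsto_exp_atBot.comp (tendsto_id.const_mul_atTop_of_neg hl)
  have h3 := (h1.const_mul 2).add (h2.const_mul 2)
  rw [mul_zero, add_zero] at h3
  refine squeeze_zero_norm' ?_ h3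
  filter_upwards [eventually_gt_atTop 0] with T hT
  exact norm_verticalIntegral_le hl hc hT

/-- The substitution `s ↦ -s`. -/
lemma verticalIntegral_neg (l c T : ℝ) : verticalIntegral l (-c) T = -verticalIntegral (-l) c T := by
  unfold verticalIntegral
  rw [← intervalIntegral.integral_neg]
  have h := intervalIntegral.integral_comp_neg (a := -T) (b := T)
    (fun t : ℝ => Complex.exp ((l : ℂ) * ((-c : ℝ) + t * Complex.I)) / ((-c : ℝ) + t * Complex.I))
  rw [neg_neg] at h
  rw [← h]
  congr 1
  ext t
  rw [← div_neg]
  congr 2 <;> push_cast <;> ring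

lemma integral_one_div_vertical {c : ℝ} (hc : c ≠ 0) (T : ℝ) :
    ∫ t in (-T)..T, 1 / ((c : ℂ) + t * Complex.I) = ((2 * Real.arctan (T / c) : ℝ) : ℂ) := by
  have hcont : Continuous fun t : ℝ => 1 / ((c : ℂ) + t * Complex.I) :=
    continuous_const.div (by fun_prop) (add_mul_I_ne_zero hc)
  have hcont' : Continuous fun t : ℝ => 1 / ((c : ℂ) + (-t : ℝ) * Complex.I) :=
    hcont.comp continuous_neg
  have hpos (t : ℝ) : c ^ 2 + t ^ 2 ≠ 0 := by positivity
  -- Averaging over `t` and `-t` leaves only the even part of the integrand.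
  have hneg := intervalIntegral.integral_comp_neg (a := -T) (b := T)
    (fun t : ℝ => 1 / ((c : ℂ) + t * Complex.I))
  rw [neg_neg] at hneg
  have hsum := intervalIntegral.integral_add (μ := MeasureTheory.volume)
    (hcont.intervalIntegrable (-T) T) (hcont'.intervalIntegrable (-T) T)
  rw [hneg] at hsum
  have heven : ∫ t in (-T)..T,
      (1 / ((c : ℂ) + t * Complex.I) + 1 / ((c : ℂ) + (-t : ℝ) * Complex.I))
      = ((∫ t in (-T)..T, 2 * (c / (c ^ 2 + t ^ 2)) : ℝ) : ℂ) := by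
    rw [← intervalIntegral.integral_ofReal]
    congr 1
    ext t
    have h1 := add_mul_I_ne_zero hc t
    have h2 := add_mul_I_ne_zero hc (-t)
    have h3 : (c : ℂ) ^ 2 + (t : ℂ) ^ 2 ≠ 0 := by exact_mod_cast hpos t
    rw [div_add_div _ _ h1 h2]
    have h4 : ((c : ℂ) + t * Complex.I) * (c + (-t : ℝ) * Complex.I) = c ^ 2 + t ^ 2 := by
      push_cast
      linear_combination -(t : ℂ) ^ 2 * Complex.I_sq
    rw [h4]
    push_cast
    ring
  have hreal : ∫ t in (-T)..T, 2 * (c / (c ^ 2 + t ^ 2))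
      = 2 * Real.arctan (T / c) - 2 * Real.arctan (-T / c) := by
    apply intervalIntegral.integral_eq_sub_of_hasDerivAt (f := fun t => 2 * Real.arctan (t / c))
    · intro t _
      refine ((((hasDerivAt_id' t).div_const c).arctan).const_mul 2).congr_deriv ?_
      have := hpos t
      have h5 : 1 + (t / c) ^ 2 ≠ 0 := by positivity
      field_simp
    · exact (continuous_const.mul (continuous_const.div (by fun_prop) hpos)).intervalIntegrable _ _
  rw [heven, hreal, neg_div, Real.arctan_neg] at hsum
  push_cast at hsum ⊢
  linear_combination -hsum / 2

/-- The entire function that equals `(exp (l * s) - 1) / s` for `s ≠ 0`. -/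
noncomputable def expQuot (l : ℝ) : ℂ → ℂ := dslope (fun s => Complex.exp ((l : ℂ) * s)) 0

lemma expQuot_of_ne (l : ℝ) {s : ℂ} (hs : s ≠ 0) :
    expQuot l s = (Complex.exp ((l : ℂ) * s) - 1) / s := by
  simp [expQuot, dslope_of_ne _ hs, slope_def_field]

lemma differentiable_expQuot (l : ℝ) : Differentiable ℂ (expQuot l) := by
  rw [← differentiableOn_univ]
  exact (Complex.differentiableOn_dslope Filter.univ_mem).2
    (Differentiable.differentiableOn (by fun_prop))

lemma integral_expQuot_vertical (l : ℝ) {c : ℝ} (hc : c ≠ 0) (T : ℝ) :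
    ∫ t in (-T)..T, expQuot l (c + t * Complex.I)
      = verticalIntegral l c T - ((2 * Real.arctan (T / c) : ℝ) : ℂ) := by
  rw [← integral_one_div_vertical hc, verticalIntegral, ← intervalIntegral.integral_sub]
  · congr 1
    ext t
    rw [expQuot_of_ne l (add_mul_I_ne_zero hc t), sub_div]
  · exact (Continuous.div (by fun_prop) (by fun_prop)
      (add_mul_I_ne_zero hc)).intervalIntegrable _ _
  · exact (continuous_const.div (by fun_prop) (add_mul_I_ne_zero hc)).intervalIntegrable _ _

lemma norm_integral_expQuot_horizontal_le {l c T y : ℝ} (hl : 0 < l) (hc : 0 < c) (hT : 0 < T)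
    (hy : |y| = T) :
    ‖∫ x in (-c)..c, expQuot l (x + y * Complex.I)‖ ≤ (Real.exp (l * c) + 1) * (2 * c) / T := by
  have h : ‖∫ x in (-c)..c, expQuot l (x + y * Complex.I)‖
      ≤ (Real.exp (l * c) + 1) / T * |c - (-c)| := by
    apply intervalIntegral.norm_integral_le_of_norm_le_const
    intro x hx
    rw [Set.uIoc_of_le (by linarith)] at hx
    have hn : T ≤ ‖(x : ℂ) + y * Complex.I‖ := hy ▸ abs_le_norm_add_mul_I x y
    have h0 : (x : ℂ) + y * Complex.I ≠ 0 := norm_pos_iff.1 (hT.trans_le hn)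
    rw [expQuot_of_ne l h0, norm_div]
    gcongr
    refine (norm_sub_le _ _).trans ?_
    rw [norm_exp_mul_vertical, norm_one]
    gcongr
    exact hx.2
  refine h.trans (le_of_eq ?_)
  rw [abs_of_pos (by linarith)]
  ring

/-- Moving the line of integration across the pole at `0` changes the integral by `2π` in the
limit. -/
lemma tendsto_verticalIntegral_sub {l c : ℝ} (hl : 0 < l) (hc : 0 < c) :
    Tendsto (fun T => verticalIntegral l c T - verticalIntegral l (-c) T) atTop
      (nhds ((2 * Real.pi : ℝ) : ℂ)) := by
  have hrect (T : ℝ) := Complex.integral_boundary_rect_eq_zero_of_differentiableOn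
    (expQuot l) ⟨-c, -T⟩ ⟨c, T⟩ (differentiable_expQuot l).differentiableOn
  simp only [smul_eq_mul] at hrect
  have herr : Tendsto (fun T : ℝ => verticalIntegral l c T - verticalIntegral l (-c) T
      - ((4 * Real.arctan (T / c) : ℝ) : ℂ)) atTop (nhds 0) := by
    have hlim : Tendsto (fun T : ℝ => 2 * ((Real.exp (l * c) + 1) * (2 * c) / T)) atTop
        (nhds 0) := by
      simpa using (tendsto_const_nhds.div_atTop tendsto_id).const_mul (2 : ℝ)
    refine squeeze_zero_norm' ?_ hlim
    filter_upwards [eventually_gt_atTop 0] with T hT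
    have hb := norm_integral_expQuot_horizontal_le (y := -T) hl hc hT
      (by rw [abs_neg, abs_of_pos hT])
    have ht := norm_integral_expQuot_horizontal_le (y := T) hl hc hT (abs_of_pos hT)
    have hr := hrect T
    rw [integral_expQuot_vertical l hc.ne', integral_expQuot_vertical l (neg_ne_zero.2 hc.ne'),
      div_neg, Real.arctan_neg] at hr
    set B := ∫ x in (-c)..c, expQuot l (x + (-T : ℝ) * Complex.I)
    set U := ∫ x in (-c)..c, expQuot l (x + T * Complex.I)
    have hV : Complex.I * (verticalIntegral l c T - verticalIntegral l (-c) T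
        - ((4 * Real.arctan (T / c) : ℝ) : ℂ)) = U - B := by
      push_cast at hr ⊢
      linear_combination hr
    have hn := congrArg norm hV
    rw [norm_mul, Complex.norm_I, one_mul] at hn
    rw [hn]
    have h2 := norm_sub_le U B
    linarith
  have harc : Tendsto (fun T : ℝ => ((4 * Real.arctan (T / c) : ℝ) : ℂ)) atTop
      (nhds ((2 * Real.pi : ℝ) : ℂ)) := by
    have h := (tendsto_nhds_of_tendsto_nhdsWithin Real.tendsto_arctan_atTop).comp
      ((tendsto_id (α := ℝ)).atTop_div_const hc)
    have h4 := h.const_mul 4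
    rw [show 4 * (Real.pi / 2) = 2 * Real.pi by ring] at h4
    exact (Complex.continuous_ofReal.tendsto _).comp h4
  simpa using herr.add harc

lemma tendsto_verticalIntegral_of_pos {l c : ℝ} (hl : 0 < l) (hc : 0 < c) :
    Tendsto (verticalIntegral l c) atTop (nhds ((2 * Real.pi : ℝ) : ℂ)) := by
  have h := (tendsto_verticalIntegral_sub hl hc).sub
    (tendsto_verticalIntegral_of_neg (neg_lt_zero.2 hl) hc)
  rw [sub_zero] at h
  refine h.congr fun T => ?_
  rw [verticalIntegral_neg]
  ring

/-- Perron's discontinuous integral: for `c > 0` and real `l ≠ 0`,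
`(1/2πi) ∫_{c-iT}^{c+iT} e^{ls}/s ds → 1` if `l > 0` and `→ 0` if `l < 0`,
as `T → ∞` (parametrizing `s = c + it`, `ds = i dt`). -/
theorem perron_discontinuous_integral (c l : ℝ) (hc : 0 < c) (hl : l ≠ 0) :
    Tendsto
      (fun T : ℝ =>
        (2 * Real.pi * Complex.I)⁻¹ *
          ∫ t in (-T)..T,
            Complex.exp ((l : ℂ) * (c + t * Complex.I)) / (c + t * Complex.I) *
              Complex.I)
      atTop (nhds (if 0 < l then (1 : ℂ) else 0)) := by
  have hpi : (Real.pi : ℂ) ≠ 0 := by exact_mod_cast Real.pi_ne_zero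
  have heq (T : ℝ) : (2 * Real.pi : ℂ)⁻¹ * verticalIntegral l c T =
      (2 * Real.pi * Complex.I)⁻¹ * ∫ t in (-T)..T,
        Complex.exp ((l : ℂ) * (c + t * Complex.I)) / (c + t * Complex.I) * Complex.I := by
    rw [intervalIntegral.integral_mul_const, verticalIntegral, mul_inv]
    linear_combination (-(2 * Real.pi : ℂ)⁻¹ * ∫ t in (-T)..T,
      Complex.exp ((l : ℂ) * (c + t * Complex.I)) / (c + t * Complex.I)) *
        inv_mul_cancel₀ Complex.I_ne_zero
  refine Tendsto.congr heq ?_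
  rcases lt_or_gt_of_ne hl with h | h
  · rw [if_neg h.not_gt]
    simpa using (tendsto_verticalIntegral_of_neg h hc).const_mul (2 * Real.pi : ℂ)⁻¹
  · rw [if_pos h]
    have h2 := (tendsto_verticalIntegral_of_pos h hc).const_mul (2 * Real.pi : ℂ)⁻¹
    rwa [Complex.ofReal_mul, Complex.ofReal_ofNat,
      inv_mul_cancel₀ (mul_ne_zero two_ne_zero hpi)] at h2
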